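/- Let k ≥ 0 be an integer and G = (V,Σ,P,S) a reduced context-free grammar. If two distinct LR(k)-items [A → β·, u] and [C → β₁·, u] with the same lookahead u are both valid for the same string αβ ∈ V* (so that in particular β₁ is a suffix of αβ), then G is not LR(k). -/

import Mathlib

/-!
Formalization framework for context-free grammars with distinguished
terminal type `T` and nonterminal type `N`.

* `CFG T N` : a context-free grammar `G = (V, Σ, P, S)` where
  `V = Symbol T N`, `Σ = T`, `N` the nonterminals, `P = G.rules`, `S = G.start`.
* `CFG.Derives` : the (unrestricted) derivation relation `⇒*`.
* `CFG.RmDerives` : the rightmost derivation relation `⇒*_rm`.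
* `CFG.LmStep` : one leftmost derivation step.
* `CFG.FirstK G k α` : the set `FIRST_k(α)`.
* `CFG.Reduced` : `G` is reduced.
* `CFG.IsLR G k` : `G` is an `LR(k)`-grammar.
* `CFG.ValidItem G k A β₁ β₂ u γ` : the `LR(k)`-item `[A → β₁·β₂, u]`
  is valid for the string `γ` (so that `γ = α ++ β₁` for some `α`).
-/

/-- A context-free grammar with terminals `T`, nonterminals `N`,
a set of productions and a start symbol. -/
structure CFG (T N : Type) where
  /-- the set `P` of productions `A → α` -/
  rules : Set (N × List (Symbol T N))
  /-- the start symbol `S` -/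
  start : N

namespace CFG

variable {T N : Type}

/-- One (unrestricted) derivation step `α ⇒ β`. -/
def Step (G : CFG T N) (α β : List (Symbol T N)) : Prop :=
  ∃ (A : N) (δ φ ψ : List (Symbol T N)),
    (A, δ) ∈ G.rules ∧ α = φ ++ [Symbol.nonterminal A] ++ ψ ∧ β = φ ++ δ ++ ψ

/-- The derivation relation `α ⇒* β`. -/
def Derives (G : CFG T N) : List (Symbol T N) → List (Symbol T N) → Prop :=
  Relation.ReflTransGen G.Step

/-- One rightmost derivation step `α ⇒_rm β`:
the rewritten nonterminal is followed only by terminals. -/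
def RmStep (G : CFG T N) (α β : List (Symbol T N)) : Prop :=
  ∃ (A : N) (δ φ : List (Symbol T N)) (w : List T),
    (A, δ) ∈ G.rules ∧ α = φ ++ [Symbol.nonterminal A] ++ w.map Symbol.terminal ∧
      β = φ ++ δ ++ w.map Symbol.terminal

/-- The rightmost derivation relation `α ⇒*_rm β`. -/
def RmDerives (G : CFG T N) : List (Symbol T N) → List (Symbol T N) → Prop :=
  Relation.ReflTransGen G.RmStep

/-- One leftmost derivation step `α ⇒_lm β`:
the rewritten nonterminal is preceded only by terminals. -/
def LmStep (G : CFG T N) (α β : List (Symbol T N)) : Prop :=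
  ∃ (A : N) (δ ψ : List (Symbol T N)) (w : List T),
    (A, δ) ∈ G.rules ∧ α = w.map Symbol.terminal ++ [Symbol.nonterminal A] ++ ψ ∧
      β = w.map Symbol.terminal ++ δ ++ ψ

/-- `FIRST_k(α) = {x ∈ Σ* ∣ α ⇒* xy, (y ∈ Σ⁺ ∧ |x| = k) ∨ (y = ε ∧ |x| ≤ k)}`. -/
def FirstK (G : CFG T N) (k : ℕ) (α : List (Symbol T N)) : Set (List T) :=
  { x | ∃ y : List T,
      G.Derives α ((x ++ y).map Symbol.terminal) ∧
      ((y ≠ [] ∧ x.length = k) ∨ (y = [] ∧ x.length ≤ k)) }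

/-- `G` is reduced: `P = ∅` or every symbol `X ∈ V` occurs in a derivation
`S ⇒* αXβ ⇒* w` of a terminal word. -/
def Reduced (G : CFG T N) : Prop :=
  G.rules = ∅ ∨ ∀ X : Symbol T N, ∃ (α β : List (Symbol T N)) (w : List T),
    G.Derives [Symbol.nonterminal G.start] (α ++ [X] ++ β) ∧
    G.Derives (α ++ [X] ++ β) (w.map Symbol.terminal)

/-- `G` is `LR(k)`: whenever `S ⇒*_rm αAw ⇒_rm αβw` and
`S ⇒*_rm γBx ⇒_rm γδx = αβy` with `FIRST_k(w) = FIRST_k(y)`,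
then `α = γ`, `A = B` and `x = y`. -/
def IsLR (G : CFG T N) (k : ℕ) : Prop :=
  ∀ (α β γ δ : List (Symbol T N)) (A B : N) (w x y : List T),
    G.RmDerives [Symbol.nonterminal G.start]
      (α ++ [Symbol.nonterminal A] ++ w.map Symbol.terminal) →
    (A, β) ∈ G.rules →
    G.RmDerives [Symbol.nonterminal G.start]
      (γ ++ [Symbol.nonterminal B] ++ x.map Symbol.terminal) →
    (B, δ) ∈ G.rules →
    γ ++ δ ++ x.map Symbol.terminal = α ++ β ++ y.map Symbol.terminal →
    G.FirstK k (w.map Symbol.terminal) = G.FirstK k (y.map Symbol.terminal) →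
    α = γ ∧ A = B ∧ x = y

/-- The `LR(k)`-item `[A → β₁·β₂, u]` is valid for `γ = α ++ β₁` if there is a
rightmost derivation `S ⇒*_rm αAw ⇒_rm αβ₁β₂w` with `u ∈ FIRST_k(β₂w)`,
where `u ∈ Σ^{≤k}`. -/
def ValidItem (G : CFG T N) (k : ℕ) (A : N) (β₁ β₂ : List (Symbol T N)) (u : List T)
    (γ : List (Symbol T N)) : Prop :=
  u.length ≤ k ∧ (A, β₁ ++ β₂) ∈ G.rules ∧
  ∃ (α : List (Symbol T N)) (w : List T),
    γ = α ++ β₁ ∧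
    G.RmDerives [Symbol.nonterminal G.start]
      (α ++ [Symbol.nonterminal A] ++ w.map Symbol.terminal) ∧
    u ∈ G.FirstK k (β₂ ++ w.map Symbol.terminal)

end CFG

namespace CFG

variable {T N : Type} {G : CFG T N} {k : ℕ}

theorem not_step_map_terminal (w : List T) (α : List (Symbol T N)) :
    ¬ G.Step (w.map Symbol.terminal) α := by
  rintro ⟨A, δ, φ, ψ, -, hw, -⟩
  have hA : Symbol.nonterminal A ∈ w.map (Symbol.terminal (N := N)) := by simp [hw]
  simp at hA

theorem derives_map_terminal_iff {w : List T} {α : List (Symbol T N)} :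
    G.Derives (w.map Symbol.terminal) α ↔ α = w.map Symbol.terminal :=
  Relation.reflTransGen_iff_eq (not_step_map_terminal w)

theorem derives_map_terminal_map_terminal_iff {v w : List T} :
    G.Derives (w.map Symbol.terminal) (v.map Symbol.terminal) ↔ v = w :=
  derives_map_terminal_iff.trans
    (List.map_injective_iff.mpr fun _ _ => Symbol.terminal.inj).eq_iff

theorem firstK_map_terminal (G : CFG T N) (k : ℕ) (w : List T) :
    G.FirstK k (w.map Symbol.terminal) = {w.take k} := by
  ext x
  simp only [FirstK, derives_map_terminal_map_terminal_iff, Set.mem_ofPred_eq,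
    Set.mem_singleton_iff]
  constructor
  · rintro ⟨y, rfl, ⟨-, rfl⟩ | ⟨rfl, hx⟩⟩
    · exact List.take_left.symm
    · rw [List.append_nil, List.take_of_length_le hx]
  · rintro rfl
    refine ⟨w.drop k, List.take_append_drop k w, ?_⟩
    rcases lt_or_ge k w.length with hk | hk
    · exact .inl ⟨by simpa using hk, List.length_take_of_le hk.le⟩
    · exact .inr ⟨List.drop_of_length_le hk, List.length_take_le k w⟩

theorem validItem_nil_iff {A : N} {β γ : List (Symbol T N)} {u : List T} :
    G.ValidItem k A β [] u γ ↔
      (A, β) ∈ G.rules ∧ ∃ (α : List (Symbol T N)) (w : List T), γ = α ++ β ∧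
        G.RmDerives [Symbol.nonterminal G.start]
          (α ++ [Symbol.nonterminal A] ++ w.map Symbol.terminal) ∧ u = w.take k := by
  simp only [ValidItem, List.append_nil, List.nil_append, firstK_map_terminal,
    Set.mem_singleton_iff, and_iff_right_iff_imp]
  rintro ⟨-, -, w, -, -, rfl⟩
  exact List.length_take_le k w

end CFG

theorem statement_4_general {T N : Type} {G : CFG T N} {k : ℕ} {A C : N}
    {β β₁ : List (Symbol T N)} {u : List T} {γ : List (Symbol T N)}
    (h1 : G.ValidItem k A β [] u γ) (h2 : G.ValidItem k C β₁ [] u γ)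
    (hne : (A, β) ≠ (C, β₁)) : ¬ G.IsLR k := by
  intro hLR
  obtain ⟨hA, α, w, rfl, hαw, hu⟩ := CFG.validItem_nil_iff.mp h1
  obtain ⟨hC, α', x, hγ, hαx, hu'⟩ := CFG.validItem_nil_iff.mp h2
  have hfirst : G.FirstK k (w.map Symbol.terminal) = G.FirstK k (x.map Symbol.terminal) := by
    rw [CFG.firstK_map_terminal, CFG.firstK_map_terminal, ← hu, ← hu']
  -- Since both handles end at the same place, the `LR(k)` condition applies with `y = x`.
  obtain ⟨rfl, rfl, -⟩ := hLR α β α' β₁ A C w x x hαw hA hαx hC (by rw [hγ]) hfirst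
  exact hne (congrArg (Prod.mk A) (List.append_cancel_left hγ))

/-- **Case 1 of Theorem 1.** If two distinct complete `LR(k)`-items
`[A → β·, u]` and `[C → β₁·, u]` with the same lookahead `u` are both valid for the
same string `γ = αβ ∈ V*`, then the reduced cfg `G` is not `LR(k)`. -/
theorem statement_4 {T N : Type} (G : CFG T N) (k : ℕ) (hred : G.Reduced)
    (A C : N) (β β₁ : List (Symbol T N)) (u : List T) (γ : List (Symbol T N))
    (h1 : G.ValidItem k A β [] u γ)
    (h2 : G.ValidItem k C β₁ [] u γ)
    (hne : (A, β) ≠ (C, β₁)) :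
    ¬ G.IsLR k :=
  statement_4_general h1 h2 hne
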